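/- arXiv:1602.06715 — 6 statements merged into one kernel-verified Lean document; each statement's English description precedes it below -/
import Mathlib

section
/- For any finite abelian group G and integer k ≥ 1, M_k(G) = max{ |H| · N_k(G/H) : H a subgroup of G }. -/
open Pointwise

/-- `itSum k A` is the `k`-fold sumset `kA = {a₁ + ⋯ + a_k : aᵢ ∈ A}`. -/
def itSum {G : Type*} [AddCommGroup G] : ℕ → Set G → Set G
  | 0, _ => {0}
  | (k + 1), A => itSum k A + A

/-- `Mk G k` is the largest size of a subset `A ⊆ G` with `kA ≠ G`. -/
noncomputable def Mk (G : Type*) [AddCommGroup G] (k : ℕ) : ℕ :=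
  sSup {m : ℕ | ∃ A : Set G, itSum k A ≠ Set.univ ∧ m = A.ncard}

/-- `Nk G k` is the largest size of an aperiodic subset `A ⊆ G` with `kA ≠ G` which is
maximal with this property; `0` if no such subset exists. -/
noncomputable def Nk (G : Type*) [AddCommGroup G] (k : ℕ) : ℕ :=
  sSup {m : ℕ | ∃ A : Set G,
    {g : G | g +ᵥ A = A} = {0} ∧
    itSum k A ≠ Set.univ ∧
    (∀ g ∉ A, itSum k (A ∪ {g}) = Set.univ) ∧
    m = A.ncard}


theorem itSum_preimage {G : Type*} [AddCommGroup G] (H : AddSubgroup G) (B : Set (G ⧸ H))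
    (k : ℕ) (hk : 1 ≤ k) :
    itSum k ((QuotientAddGroup.mk : G → G ⧸ H) ⁻¹' B) =
      (QuotientAddGroup.mk : G → G ⧸ H) ⁻¹' (itSum k B) := by
  induction k, hk using Nat.le_induction with
  | base => simp [itSum]
  | succ n hn ih =>
    rw [itSum, itSum, ih]
    ext x
    simp only [Set.mem_add, Set.mem_preimage]
    constructor
    · rintro ⟨a, ha, b, hb, rfl⟩
      exact ⟨_, ha, _, hb, rfl⟩
    · rintro ⟨a, ha, b, hb, h⟩
      obtain ⟨b, rfl⟩ := QuotientAddGroup.mk_surjective b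
      refine ⟨x - b, ?_, b, hb, by abel⟩
      have : ((x - b : G) : G ⧸ H) = a := by
        rw [QuotientAddGroup.mk_sub, ← h]; abel
      rw [this]; exact ha

theorem ncard_preimage_mk {G : Type*} [AddCommGroup G] (H : AddSubgroup G)
    (B : Set (G ⧸ H)) :
    ((QuotientAddGroup.mk : G → G ⧸ H) ⁻¹' B).ncard = Nat.card H * B.ncard := by
  rw [← Nat.card_coe_set_eq, ← Nat.card_coe_set_eq, ← Nat.card_prod]
  exact Nat.card_congr (QuotientAddGroup.preimageMkEquivAddSubgroupProdSet H B)

theorem Mk_bdd (G : Type*) [AddCommGroup G] [Finite G] (k : ℕ) :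
    BddAbove {m : ℕ | ∃ A : Set G, itSum k A ≠ Set.univ ∧ m = A.ncard} := by
  refine ⟨Nat.card G, ?_⟩
  rintro m ⟨A, -, rfl⟩
  exact Set.ncard_le_card A

theorem Nk_bdd (G : Type*) [AddCommGroup G] [Finite G] (k : ℕ) :
    BddAbove {m : ℕ | ∃ A : Set G,
    {g : G | g +ᵥ A = A} = {0} ∧
    itSum k A ≠ Set.univ ∧
    (∀ g ∉ A, itSum k (A ∪ {g}) = Set.univ) ∧
    m = A.ncard} := by
  refine ⟨Nat.card G, ?_⟩
  rintro m ⟨A, -, -, -, rfl⟩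
  exact Set.ncard_le_card A

theorem upper_aux (G : Type*) [AddCommGroup G] [Finite G] (k : ℕ) (hk : 1 ≤ k)
    (H : AddSubgroup G) : Nat.card H * Nk (G ⧸ H) k ≤ Mk G k := by
  rcases Set.eq_empty_or_nonempty {m : ℕ | ∃ A : Set (G ⧸ H),
    {g : G ⧸ H | g +ᵥ A = A} = {0} ∧
    itSum k A ≠ Set.univ ∧
    (∀ g ∉ A, itSum k (A ∪ {g}) = Set.univ) ∧
    m = A.ncard} with h | h
  · rw [Nk, h]; simp
  · obtain ⟨B, -, h2, -, h4⟩ := Nat.sSup_mem h (Nk_bdd (G ⧸ H) k)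
    rw [Nk, h4, ← ncard_preimage_mk]
    refine le_csSup (Mk_bdd G k) ⟨_, ?_, rfl⟩
    rw [itSum_preimage H B k hk]
    intro h
    apply h2
    rw [← Set.preimage_univ (f := (QuotientAddGroup.mk : G → G ⧸ H))] at h
    exact QuotientAddGroup.mk_surjective.preimage_injective h

theorem lower_aux (G : Type*) [AddCommGroup G] [Finite G] (k : ℕ) (hk : 1 ≤ k) :
    ∃ H : AddSubgroup G, Mk G k ≤ Nat.card H * Nk (G ⧸ H) k := by
  have hne : {m : ℕ | ∃ A : Set G, itSum k A ≠ Set.univ ∧ m = A.ncard}.Nonempty := by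
    refine ⟨_, ∅, ?_, rfl⟩
    obtain ⟨n, rfl⟩ : ∃ n, k = n + 1 := ⟨k - 1, by omega⟩
    simp [itSum, Set.empty_ne_univ]
  obtain ⟨A, hA, hAm⟩ := Nat.sSup_mem hne (Mk_bdd G k)
  let H : AddSubgroup G := AddAction.stabilizer G A
  have memH : ∀ g, g ∈ H ↔ g +ᵥ A = A := fun g => AddAction.mem_stabilizer_iff
  let B : Set (G ⧸ H) := (QuotientAddGroup.mk : G → G ⧸ H) '' A
  have hBA : (QuotientAddGroup.mk : G → G ⧸ H) ⁻¹' B = A := by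
    ext x
    constructor
    · rintro ⟨a, ha, hax⟩
      have h1 := (memH _).1 (QuotientAddGroup.eq.1 hax)
      rw [← h1]
      exact ⟨a, ha, by simp [vadd_eq_add]⟩
    · exact fun h => ⟨x, h, rfl⟩
  have surj : Function.Surjective (QuotientAddGroup.mk : G → G ⧸ H) :=
    QuotientAddGroup.mk_surjective
  refine ⟨H, ?_⟩
  have e : Mk G k = Nat.card H * B.ncard := by
    rw [← ncard_preimage_mk, hBA]; exact hAm
  rw [e]
  refine Nat.mul_le_mul_left _ (le_csSup (Nk_bdd (G ⧸ H) k) ⟨B, ?_, ?_, ?_, rfl⟩)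
  · ext g
    obtain ⟨g, rfl⟩ := surj g
    simp only [Set.mem_setOf_eq, Set.mem_singleton_iff, QuotientAddGroup.eq_zero_iff]
    constructor
    · intro h
      rw [memH]
      ext x
      rw [Set.mem_vadd_set_iff_neg_vadd_mem, ← hBA, Set.mem_preimage, Set.mem_preimage]
      conv_rhs => rw [← h, Set.mem_vadd_set_iff_neg_vadd_mem]
      rfl
    · intro h
      rw [(QuotientAddGroup.eq_zero_iff g).2 h, zero_vadd]
  · intro h
    apply hA
    rw [← hBA, itSum_preimage H B k hk, h, Set.preimage_univ]
  · intro g hg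
    by_contra hcon
    have hlt : A.ncard < ((QuotientAddGroup.mk : G → G ⧸ H) ⁻¹' (B ∪ {g})).ncard := by
      apply Set.ncard_lt_ncard _ (Set.toFinite _)
      rw [Set.ssubset_iff_of_subset]
      · obtain ⟨g, rfl⟩ := surj g
        exact ⟨g, Or.inr rfl, fun h => hg ⟨g, h, rfl⟩⟩
      · exact fun x hx => Or.inl ⟨x, hx, rfl⟩
    have hle := le_csSup (Mk_bdd G k)
      ⟨(QuotientAddGroup.mk : G → G ⧸ H) ⁻¹' (B ∪ {g}), by
        rw [itSum_preimage H _ k hk]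
        intro h
        apply hcon
        rw [← Set.preimage_univ (f := (QuotientAddGroup.mk : G → G ⧸ H))] at h
        exact surj.preimage_injective h, rfl⟩
    omega

/-- For any finite abelian group `G` and `k ≥ 1`,
`M_k(G) = max { |H| · N_k(G/H) : H ≤ G }`. -/
theorem stmt7 (G : Type*) [AddCommGroup G] [Finite G] (k : ℕ) (hk : 1 ≤ k) :
    Mk G k = sSup {m : ℕ | ∃ H : AddSubgroup G, m = Nat.card H * Nk (G ⧸ H) k} := by
  apply le_antisymm
  · obtain ⟨H, hH⟩ := lower_aux G k hk
    refine hH.trans (le_csSup ⟨Mk G k, ?_⟩ ⟨H, rfl⟩)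
    rintro m ⟨H, rfl⟩
    exact upper_aux G k hk H
  · refine csSup_le ⟨_, ⊥, rfl⟩ ?_
    rintro m ⟨H, rfl⟩
    exact upper_aux G k hk H
end

section
/- Let n ≥ 1 be an integer and G = (ℤ/5ℤ)^n. If A ⊆ G is a union of two distinct cosets of a subgroup of G of index 5, then 3A ≠ G, and moreover 3(A ∪ {g}) = G for every element g ∈ G∖A. -/
open Pointwise

theorem exists_phi {G : Type*} [AddCommGroup G] (F : AddSubgroup G) (hF : F.index = 5) :
    ∃ φ : G →+ ZMod 5, Function.Surjective φ ∧ ∀ x, φ x = 0 ↔ x ∈ F := by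
  have hcard : Nat.card (G ⧸ F) = 5 := hF
  have : Fact (Nat.Prime 5) := ⟨by norm_num⟩
  have : IsAddCyclic (G ⧸ F) := isAddCyclic_of_prime_card hcard
  obtain ⟨e⟩ : Nonempty (ZMod 5 ≃+ G ⧸ F) := by
    have h : Nonempty (ZMod (Nat.card (G ⧸ F)) ≃+ G ⧸ F) := ⟨zmodAddCyclicAddEquiv inferInstance⟩
    rw [hcard] at h
    exact h
  refine ⟨e.symm.toAddMonoidHom.comp (QuotientAddGroup.mk' F), ?_, ?_⟩
  · exact e.symm.surjective.comp (QuotientAddGroup.mk'_surjective F)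
  · intro x
    simp

theorem z5_miss : ∀ a b : ZMod 5, ∃ t, ∀ x y z, (x = a ∨ x = b) → (y = a ∨ y = b) →
    (z = a ∨ z = b) → x + y + z ≠ t := by decide

theorem z5_hit : ∀ a b c : ZMod 5, a ≠ b → c ≠ a → c ≠ b → ∀ t,
    ∃ y z, (y = a ∨ y = b ∨ y = c) ∧ (z = a ∨ z = b ∨ z = c) ∧
      (t - y - z = a ∨ t - y - z = b) := by decide

theorem mem_itSum3 {G : Type*} [AddCommGroup G] (A : Set G) (t : G) :
    t ∈ itSum 3 A ↔ ∃ x ∈ A, ∃ y ∈ A, ∃ z ∈ A, x + y + z = t := by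
  simp only [itSum, Set.mem_add, Set.mem_singleton_iff]
  constructor
  · rintro ⟨_, ⟨_, ⟨_, rfl, x, hx, rfl⟩, y, hy, rfl⟩, z, hz, rfl⟩
    exact ⟨x, hx, y, hy, z, hz, by simp⟩
  · rintro ⟨x, hx, y, hy, z, hz, rfl⟩
    exact ⟨_, ⟨_, ⟨0, rfl, x, hx, rfl⟩, y, hy, rfl⟩, z, hz, by simp⟩

/-- If `A ⊆ (ℤ/5ℤ)ⁿ` is a union of two distinct cosets of an index-5 subgroup, then
`3A ≠ G` and `3(A ∪ {g}) = G` for every `g ∈ G∖A`. -/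
theorem stmt8 (n : ℕ) (hn : 1 ≤ n) (F : AddSubgroup (Fin n → ZMod 5))
    (hF : F.index = 5) (c₁ c₂ : Fin n → ZMod 5) (hc : c₁ - c₂ ∉ F)
    (A : Set (Fin n → ZMod 5))
    (hA : A = (c₁ +ᵥ (F : Set (Fin n → ZMod 5))) ∪ (c₂ +ᵥ (F : Set (Fin n → ZMod 5)))) :
    itSum 3 A ≠ Set.univ ∧
    ∀ g ∉ A, itSum 3 (A ∪ {g}) = Set.univ := by
  obtain ⟨φ, hs, hφ⟩ := exists_phi F hF
  have hm : ∀ x, x ∈ A ↔ φ x = φ c₁ ∨ φ x = φ c₂ := by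
    intro x
    have key : ∀ c, x ∈ c +ᵥ (F : Set (Fin n → ZMod 5)) ↔ φ x = φ c := by
      intro c
      rw [Set.mem_vadd_set_iff_neg_vadd_mem, SetLike.mem_coe, ← hφ, vadd_eq_add, map_add, map_neg,
        neg_add_eq_zero, eq_comm]
    rw [hA, Set.mem_union, key, key]
  have hab : φ c₁ ≠ φ c₂ := by
    intro h
    exact hc ((hφ _).1 (by rw [map_sub, h, sub_self]))
  constructor
  · intro h
    obtain ⟨t, ht⟩ := z5_miss (φ c₁) (φ c₂)
    obtain ⟨u, rfl⟩ := hs t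
    have hu : u ∈ itSum 3 A := h ▸ Set.mem_univ u
    obtain ⟨x, hx, y, hy, z, hz, rfl⟩ := (mem_itSum3 _ _).1 hu
    exact ht _ _ _ ((hm x).1 hx) ((hm y).1 hy) ((hm z).1 hz) (by simp)
  · intro g hg
    rw [hm, not_or] at hg
    have h1 : c₁ ∈ A ∪ {g} := Or.inl ((hm _).2 (Or.inl rfl))
    have h2 : c₂ ∈ A ∪ {g} := Or.inl ((hm _).2 (Or.inr rfl))
    have h3 : g ∈ A ∪ {g} := Or.inr rfl
    have lift : ∀ y, (y = φ c₁ ∨ y = φ c₂ ∨ y = φ g) → ∃ v ∈ A ∪ {g}, φ v = y := by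
      rintro y (rfl | rfl | rfl)
      exacts [⟨_, h1, rfl⟩, ⟨_, h2, rfl⟩, ⟨_, h3, rfl⟩]
    refine Set.eq_univ_of_forall fun u => (mem_itSum3 _ _).2 ?_
    obtain ⟨y, z, hy, hz, hx⟩ := z5_hit _ _ _ hab hg.1 hg.2 (φ u)
    obtain ⟨v, hv, rfl⟩ := lift y hy
    obtain ⟨w, hw, rfl⟩ := lift z hz
    exact ⟨u - v - w, Or.inl ((hm _).2 (by simpa using hx)), v, hv, w, hw, by abel⟩
end

section
/- Let G be a finite abelian group having an internal direct sum decomposition G = G₁ ⊕ H where G₁ is cyclic of order 3m+2 with m ≥ 1 an integer, and suppose |H| is even. Then N₃(G) ≥ ((2m+1)/(6m+4))·|G|. -/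
open Pointwise

/-- slices of the extremal set -/
def slP {H : Type*} [AddCommGroup H] (K : AddSubgroup H) (k i : ℕ) (x : H) : Prop :=
  (i = 0 ∧ x ∉ K) ∨ (1 ≤ i ∧ i ≤ k) ∨ (i = k + 1 ∧ x ≠ 0) ∨ (i = k + 2 ∧ x = 0)

section slices
variable {H : Type*} [AddCommGroup H] (K : AddSubgroup H)

theorem slP_nonempty {c : H} (hc : c ∉ K) {k j : ℕ} (hj : j ≤ k + 2) : ∃ y, slP K k j y := by
  have hc0 : c ≠ 0 := fun h => hc (h ▸ K.zero_mem)
  rcases Nat.lt_or_ge j 1 with h | h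
  · exact ⟨c, Or.inl ⟨by omega, hc⟩⟩
  rcases Nat.lt_or_ge k j with h' | h'
  · rcases Nat.lt_or_ge j (k+2) with h2 | h2
    · exact ⟨c, Or.inr (Or.inr (Or.inl ⟨by omega, hc0⟩))⟩
    · exact ⟨0, Or.inr (Or.inr (Or.inr ⟨by omega, rfl⟩))⟩
  · exact ⟨0, Or.inr (Or.inl ⟨h, h'⟩)⟩

theorem sub_not_mem {c x : H} (hc : c ∉ K) (hx : x ∈ K) : x - c ∉ K := by
  intro h
  exact hc (by simpa using K.sub_mem hx h)

theorem ne_zero_of_not_mem {c : H} (hc : c ∉ K) : c ≠ 0 := fun h => hc (h ▸ K.zero_mem)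

theorem slP_miss (hK : ∀ a b, a ∉ K → b ∉ K → a + b ∈ K) {k i j l : ℕ} {a b d : H}
    (ha : slP K k i a) (hb : slP K k j b) (hd : slP K k l d)
    (h : (3 * k + 5) ∣ i + j + l) : a + b + d ≠ 0 := by
  have hi : i ≤ k + 2 := by unfold slP at ha; omega
  have hj : j ≤ k + 2 := by unfold slP at hb; omega
  have hl : l ≤ k + 2 := by unfold slP at hd; omega
  obtain ⟨q, hq⟩ := h
  have hq2 : q < 2 := by
    by_contra hcon
    have : (3 * k + 5) * 2 ≤ (3 * k + 5) * q := Nat.mul_le_mul_left _ (by omega)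
    omega
  intro h0
  interval_cases q
  · obtain rfl : i = 0 := by omega
    obtain rfl : j = 0 := by omega
    obtain rfl : l = 0 := by omega
    have ha' : a ∉ K := by simpa [slP] using ha
    have hb' : b ∉ K := by simpa [slP] using hb
    have hd' : d ∉ K := by simpa [slP] using hd
    exact hd' ((K.add_mem_cancel_left (hK a b ha' hb')).1 (h0 ▸ K.zero_mem))
  · have hcase : (i = k + 1 ∧ j = k + 2 ∧ l = k + 2) ∨ (i = k + 2 ∧ j = k + 1 ∧ l = k + 2) ∨
      (i = k + 2 ∧ j = k + 2 ∧ l = k + 1) := by omega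
    rcases hcase with ⟨rfl, rfl, rfl⟩ | ⟨rfl, rfl, rfl⟩ | ⟨rfl, rfl, rfl⟩ <;>
      simp_all [slP]

theorem slP_cov (hK : ∀ a b, a ∉ K → b ∉ K → a + b ∈ K) {c : H} (hc : c ∉ K) {k s : ℕ}
    (hs : s < 3 * k + 5) (x : H) (hx : s ≠ 0 ∨ x ≠ 0) :
    ∃ i j l a b d, slP K k i a ∧ slP K k j b ∧ slP K k l d ∧
      (i + j + l = s ∨ i + j + l = s + (3 * k + 5)) ∧ a + b + d = x := by
  have hc0 := ne_zero_of_not_mem K hc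
  have hnc : -c ∉ K := by simpa using hc
  rcases Nat.eq_zero_or_pos s with rfl | hs0
  · have hx0 : x ≠ 0 := by simpa using hx
    exact ⟨k+1, k+2, k+2, x, 0, 0, by simp [slP, hx0], by simp [slP], by simp [slP],
      Or.inr (by omega), by simp⟩
  rcases Nat.eq_zero_or_pos k with rfl | hk
  · have hs5 : s < 5 := by omega
    interval_cases s
    · by_cases h0 : x = 0
      · exact ⟨2, 2, 2, 0, 0, 0, by simp [slP], by simp [slP], by simp [slP], by omega, by simp [h0]⟩
      · exact ⟨0, 0, 1, c, -c, x, by simp [slP, hc], by simp [slP, hc], by simp [slP, h0],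
          by omega, by simp⟩
    · by_cases h : x ∈ K
      · exact ⟨0, 0, 2, c, x - c, 0, by simp [slP, hc], by simp [slP, sub_not_mem K hc h],
          by simp [slP], by omega, by simp⟩
      · exact ⟨0, 1, 1, x, c, -c, by simp [slP, h], by simp [slP, hc0], by simp [slP, hc0],
          by omega, by simp⟩
    · by_cases h : x ∈ K
      · have := ne_zero_of_not_mem K (sub_not_mem K hc h)
        exact ⟨0, 1, 2, c, x - c, 0, by simp [slP, hc], by simp [slP, this],
          by simp [slP], by omega, by simp⟩
      · have := ne_zero_of_not_mem K h
        exact ⟨1, 1, 1, x, c, -c, by simp [slP, this], by simp [slP, hc0], by simp [slP, hc0],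
          by omega, by simp⟩
    · by_cases h : x ∈ K
      · have := ne_zero_of_not_mem K (sub_not_mem K hc h)
        exact ⟨1, 1, 2, c, x - c, 0, by simp [slP, hc0], by simp [slP, this],
          by simp [slP], by omega, by simp⟩
      · exact ⟨0, 2, 2, x, 0, 0, by simp [slP, h], by simp [slP], by simp [slP],
          by omega, by simp⟩
  · obtain ⟨f, j, l, hf1, hf2, hj, hl, hsum⟩ : ∃ f j l, 1 ≤ f ∧ f ≤ k ∧ j ≤ k + 2 ∧ l ≤ k + 2 ∧
        f + j + l = s :=
      ⟨min s k, min (s - min s k) (k+2), s - min s k - min (s - min s k) (k+2),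
        by omega, by omega, by omega, by omega, by omega⟩
    obtain ⟨b, hb⟩ := slP_nonempty K hc hj
    obtain ⟨d, hd⟩ := slP_nonempty K hc hl
    exact ⟨f, j, l, x - b - d, b, d, Or.inr (Or.inl ⟨hf1, hf2⟩), hb, hd, Or.inl hsum, by abel⟩

theorem slP_max {c : H} (hc : c ∉ K) {k i : ℕ}
    (hi : i < 3 * k + 5) (x : H) (hx : ¬ slP K k i x) :
    ∃ j l b d, (slP K k j b ∨ (j = i ∧ b = x)) ∧ slP K k l d ∧
      (3 * k + 5) ∣ i + j + l ∧ x + b + d = 0 := by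
  have hc0 := ne_zero_of_not_mem K hc
  rcases Nat.eq_zero_or_pos i with rfl | hi0
  · have hxK : x ∈ K := by simpa [slP] using hx
    refine ⟨0, 0, c, -x - c, Or.inl (by simp [slP, hc]), ?_, by simp, by abel⟩
    have := sub_not_mem K hc (K.neg_mem hxK)
    simpa [slP] using this
  rcases Nat.lt_or_ge k i with hki | hki
  swap
  · exact absurd (Or.inr (Or.inl ⟨hi0, hki⟩)) hx
  rcases eq_or_ne i (k+1) with rfl | h1
  · have hx0 : x = 0 := by simpa [slP] using hx
    exact ⟨k+2, k+2, 0, 0, Or.inl (by simp [slP]), by simp [slP], ⟨1, by ring⟩, by simp [hx0]⟩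
  rcases eq_or_ne i (k+2) with rfl | h2
  · have hx0 : x ≠ 0 := by simpa [slP] using hx
    exact ⟨k+2, k+1, 0, -x, Or.inl (by simp [slP]), by simp [slP, hx0], ⟨1, by ring⟩, by simp⟩
  rcases Nat.eq_zero_or_pos k with rfl | hk
  · have hi5 : i < 5 := by omega
    have hi3 : 3 ≤ i := by omega
    interval_cases i
    · by_cases h : x ∈ K
      · have h' := ne_zero_of_not_mem K (sub_not_mem K hc (K.neg_mem h))
        exact ⟨1, 1, c, -x - c, Or.inl (by simp [slP, hc0]), by simpa [slP] using h', by norm_num,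
          by abel⟩
      · exact ⟨2, 0, 0, -x, Or.inl (by simp [slP]), by simp [slP, h], by norm_num, by simp⟩
    · by_cases h : x ∈ K
      · have h' := ne_zero_of_not_mem K (sub_not_mem K hc (K.neg_mem h))
        exact ⟨0, 1, c, -x - c, Or.inl (by simp [slP, hc]), by simpa [slP] using h', by norm_num,
          by abel⟩
      · by_cases h' : x + x = 0
        · exact ⟨4, 2, x, 0, Or.inr ⟨rfl, rfl⟩, by simp [slP], by norm_num, by simp [h']⟩
        · exact ⟨0, 1, x, -(x + x), Or.inl (by simp [slP, h]),
            Or.inr (Or.inr (Or.inl ⟨rfl, neg_ne_zero.2 h'⟩)), by norm_num, by abel⟩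
  · obtain ⟨f, j, hf1, hf2, hj, hsum⟩ : ∃ f j, 1 ≤ f ∧ f ≤ k ∧ j ≤ k + 2 ∧
        i + j + f = 3 * k + 5 :=
      ⟨min (3*k+5-i) k, (3*k+5-i) - min (3*k+5-i) k,
        by omega, by omega, by omega, by omega⟩
    obtain ⟨b, hb⟩ := slP_nonempty K hc hj
    exact ⟨j, f, b, -x - b, Or.inl hb, Or.inr (Or.inl ⟨hf1, hf2⟩), by rw [hsum], by abel⟩

/-- the extremal set -/
def slB (k : ℕ) : Set (ZMod (3 * k + 5) × H) := {p | slP K k p.1.val p.2}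

end slices

theorem mem_itSum_three {G : Type*} [AddCommGroup G] {A : Set G} {x : G} :
    x ∈ itSum 3 A ↔ ∃ a ∈ A, ∃ b ∈ A, ∃ c ∈ A, a + b + c = x := by
  simp only [itSum, Set.mem_add, Set.mem_singleton_iff]
  constructor
  · rintro ⟨_, ⟨_, ⟨_, rfl, a, ha, rfl⟩, b, hb, rfl⟩, c, hc, rfl⟩
    exact ⟨a, ha, b, hb, c, hc, by simp⟩
  · rintro ⟨a, ha, b, hb, c, hc, rfl⟩
    exact ⟨a + b, ⟨0 + a, ⟨0, rfl, a, ha, rfl⟩, b, hb, by simp⟩, c, hc, rfl⟩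

section slices2
variable {H : Type*} [AddCommGroup H] (K : AddSubgroup H)

theorem mem_slB {k i : ℕ} (hi : i < 3 * k + 5) (x : H) :
    (((i : ℕ) : ZMod (3 * k + 5)), x) ∈ slB K k ↔ slP K k i x := by
  simp [slB, ZMod.val_natCast_of_lt hi]

theorem slP_lt {k i : ℕ} {x : H} (h : slP K k i x) : i < 3 * k + 5 := by
  unfold slP at h; omega

theorem slB_miss (hK : ∀ a b, a ∉ K → b ∉ K → a + b ∈ K) (k : ℕ) :
    (0 : ZMod (3 * k + 5) × H) ∉ itSum 3 (slB K k) := by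
  rw [mem_itSum_three]
  rintro ⟨a, ha, b, hb, d, hd, h⟩
  refine slP_miss K hK ha hb hd ?_ (congrArg Prod.snd h)
  rw [← ZMod.natCast_eq_zero_iff]
  push_cast
  simp only [ZMod.natCast_val, ZMod.cast_id', id]
  exact congrArg Prod.fst h

theorem slB_max (hK : ∀ a b, a ∉ K → b ∉ K → a + b ∈ K) {c : H} (hc : c ∉ K) (k : ℕ)
    (g : ZMod (3 * k + 5) × H) (hg : g ∉ slB K k) : itSum 3 (slB K k ∪ {g}) = Set.univ := by
  rw [Set.eq_univ_iff_forall]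
  rintro ⟨s, x⟩
  rw [mem_itSum_three]
  by_cases h0 : s.val ≠ 0 ∨ x ≠ 0
  · obtain ⟨i, j, l, a, b, d, ha, hb, hd, hs, rfl⟩ := slP_cov K hK hc (ZMod.val_lt s) x h0
    refine ⟨_, Or.inl ((mem_slB K (slP_lt K ha) a).2 ha), _,
      Or.inl ((mem_slB K (slP_lt K hb) b).2 hb), _, Or.inl ((mem_slB K (slP_lt K hd) d).2 hd), ?_⟩
    refine Prod.ext ?_ rfl
    have : ((i + j + l : ℕ) : ZMod (3 * k + 5)) = s := by
      rcases hs with hs | hs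
      · rw [hs]; simp
      · rw [hs, Nat.cast_add, ZMod.natCast_self]; simp
    simpa using this
  · push Not at h0
    obtain ⟨hs, rfl⟩ := h0
    obtain rfl : s = 0 := (ZMod.val_eq_zero s).1 hs
    obtain ⟨gi, gx⟩ := g
    obtain ⟨j, l, b, d, hb, hd, hdv, hsum⟩ := slP_max K hc (ZMod.val_lt gi) gx hg
    refine ⟨(gi, gx), Or.inr rfl, ((j : ZMod (3 * k + 5)), b), ?_, _,
      Or.inl ((mem_slB K (slP_lt K hd) d).2 hd), ?_⟩
    · rcases hb with hb | ⟨rfl, rfl⟩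
      · exact Or.inl ((mem_slB K (slP_lt K hb) b).2 hb)
      · right; simp
    · refine Prod.ext ?_ hsum
      rw [← ZMod.natCast_eq_zero_iff] at hdv
      simpa using hdv

theorem slB_aper {c : H} (hc : c ∉ K) (k : ℕ) :
    {g : ZMod (3 * k + 5) × H | g +ᵥ slB K k = slB K k} = {0} := by
  -- no small nonzero shift stabilises the set
  have key : ∀ g : ZMod (3 * k + 5) × H, g +ᵥ slB K k = slB K k →
      ¬ (1 ≤ g.1.val ∧ g.1.val ≤ 2 * k + 2) := by
    rintro ⟨t, y⟩ hg ⟨h1, h2⟩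
    have hm : (((k + 2 : ℕ) : ZMod (3 * k + 5)), (0 : H)) ∈ slB K k :=
      (mem_slB K (by omega) 0).2 (by simp [slP])
    have := Set.vadd_mem_vadd_set (a := (t, y)) hm
    rw [hg] at this
    have e : ((t, y) +ᵥ (((k + 2 : ℕ) : ZMod (3 * k + 5)), (0 : H))) =
        (((t.val + (k + 2) : ℕ) : ZMod (3 * k + 5)), y) := by
      simp [vadd_eq_add]
    simp only at h1 h2
    rw [e, mem_slB K (by omega)] at this
    unfold slP at this
    omega
  ext g
  simp only [Set.mem_setOf_eq, Set.mem_singleton_iff]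
  constructor
  · intro hg
    have h1 := key g hg
    have hg' : (-g) +ᵥ slB K k = slB K k := by
      conv_lhs => rw [← hg]
      simp
    have h2 := key (-g) hg'
    have hz : g.1 = 0 := by
      by_contra hne
      have hlt := ZMod.val_lt g.1
      have hv : g.1.val ≠ 0 := fun h => hne ((ZMod.val_eq_zero _).1 h)
      haveI : NeZero g.1 := ⟨hne⟩
      rw [Prod.fst_neg, ZMod.val_neg_of_ne_zero] at h2
      omega
    have hm : (((k + 2 : ℕ) : ZMod (3 * k + 5)), (0 : H)) ∈ slB K k :=
      (mem_slB K (by omega) 0).2 (by simp [slP])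
    have := Set.vadd_mem_vadd_set (a := g) hm
    rw [hg] at this
    have e : (g +ᵥ (((k + 2 : ℕ) : ZMod (3 * k + 5)), (0 : H))) =
        (((k + 2 : ℕ) : ZMod (3 * k + 5)), g.2) := by
      refine Prod.ext ?_ ?_ <;> simp [vadd_eq_add, hz]
    rw [e, mem_slB K (by omega)] at this
    refine Prod.ext hz ?_
    simpa [slP] using this
  · rintro rfl
    simp

open Classical in
theorem slB_card [Finite H] (hcK : 2 * {x : H | x ∉ K}.ncard = Nat.card H) (k : ℕ) :
    (2 * k + 3) * Nat.card H ≤ 2 * (slB K k).ncard := by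
  haveI := Fintype.ofFinite H
  have hf : (slB K k).ncard = ∑ i ∈ Finset.range (3 * k + 5), {x : H | slP K k i x}.ncard := by
    have : (slB K k) = ((Finset.range (3 * k + 5)).sigma
        (fun i => Finset.univ.filter (fun x : H => slP K k i x))).image
        (fun p : (_ : ℕ) × H => ((p.1 : ZMod (3 * k + 5)), p.2)) := by
      ext ⟨s, x⟩
      simp only [Finset.coe_image, Set.mem_image, Finset.mem_coe, Finset.mem_sigma,
        Finset.mem_range, Finset.mem_filter, Finset.mem_univ, true_and]
      constructor
      · intro h
        exact ⟨⟨s.val, x⟩, ⟨ZMod.val_lt s, h⟩, by simp⟩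
      · rintro ⟨⟨i, y⟩, ⟨h1, h2⟩, h⟩
        rw [← h]
        exact (mem_slB K h1 y).2 h2
    rw [this, Set.ncard_coe_finset, Finset.card_image_of_injOn, Finset.card_sigma]
    · refine Finset.sum_congr rfl fun i _ => ?_
      rw [← Set.ncard_coe_finset]
      simp
    · rintro ⟨i, x⟩ h ⟨j, y⟩ h' e
      simp only [Finset.mem_coe, Finset.mem_sigma, Finset.mem_range] at h h'
      simp only [Prod.mk.injEq] at e
      obtain ⟨e1, rfl⟩ := e
      have := congrArg ZMod.val e1
      rw [ZMod.val_natCast_of_lt h.1, ZMod.val_natCast_of_lt h'.1] at this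
      subst this
      rfl
  have hle : ∑ i ∈ Finset.range (k + 3), {x : H | slP K k i x}.ncard ≤ (slB K k).ncard := by
    rw [hf]
    exact Finset.sum_le_sum_of_subset (Finset.range_mono (by omega))
  rw [Finset.sum_range_succ, Finset.sum_range_succ, Finset.sum_range_succ'] at hle
  have e0 : {x : H | slP K k 0 x} = {x : H | x ∉ K} := by ext; simp [slP]
  have e1 : {x : H | slP K k (k + 1) x} = {0}ᶜ := by ext; simp [slP]
  have e2 : {x : H | slP K k (k + 2) x} = {0} := by ext; simp [slP]
  have e3 : ∀ i ∈ Finset.range k, {x : H | slP K k (i + 1) x}.ncard = Nat.card H := by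
    intro i hi
    rw [Finset.mem_range] at hi
    have : {x : H | slP K k (i + 1) x} = Set.univ := by
      ext x
      simp only [Set.mem_setOf_eq, Set.mem_univ, iff_true]
      exact Or.inr (Or.inl ⟨by omega, by omega⟩)
    rw [this, Set.ncard_univ]
  rw [Finset.sum_congr rfl e3, e0, e1, e2] at hle
  have hadd := Set.ncard_add_ncard_compl ({0} : Set H)
  simp only [Set.ncard_singleton, Finset.sum_const, Finset.card_range, smul_eq_mul] at hle hadd
  nlinarith

end slices2

theorem exists_half {H : Type*} [AddCommGroup H] [Finite H] (he : Even (Nat.card H)) :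
    ∃ K : AddSubgroup H, (∀ a b, a ∉ K → b ∉ K → a + b ∈ K) ∧ (∃ c, c ∉ K) ∧
      2 * {x : H | x ∉ K}.ncard = Nat.card H := by
  haveI := Fintype.ofFinite H
  let D : H →+ H := nsmulAddMonoidHom 2
  have hD : D.range ≠ ⊤ := by
    intro h
    have hs : Function.Surjective D := AddMonoidHom.range_eq_top.1 h
    have hi : Function.Injective D := Finite.injective_iff_surjective.2 hs
    haveI : Fact (Nat.Prime 2) := ⟨Nat.prime_two⟩
    obtain ⟨x, hx⟩ := exists_prime_addOrderOf_dvd_card' (G := H) 2 he.two_dvd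
    have hx2 : 2 • x = 0 := by rw [← hx]; exact addOrderOf_nsmul_eq_zero x
    have : x = 0 := hi (by simpa [D] using hx2)
    rw [this] at hx
    simp at hx
  obtain ⟨K, hKc, hDK⟩ := (eq_top_or_exists_le_coatom D.range).resolve_left hD
  have h2 : ∀ x : H, x + x ∈ K := fun x => hDK ⟨x, by simp [D, two_nsmul]⟩
  have hK : ∀ a b, a ∉ K → b ∉ K → a + b ∈ K := by
    intro a b ha hb
    have htop : K ⊔ AddSubgroup.zmultiples a = ⊤ := by
      refine hKc.2 _ (lt_of_le_of_ne le_sup_left fun h => ha ?_)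
      rw [h]
      exact (le_sup_right : AddSubgroup.zmultiples a ≤ _) (AddSubgroup.mem_zmultiples a)
    have hbm : b ∈ K ⊔ AddSubgroup.zmultiples a := htop ▸ AddSubgroup.mem_top b
    obtain ⟨y, hy, z, hz, rfl⟩ := AddSubgroup.mem_sup.1 hbm
    obtain ⟨n, rfl⟩ := AddSubgroup.mem_zmultiples_iff.1 hz
    have h2n : ∀ r : ℤ, (r + r) • a ∈ K := fun r => by rw [add_zsmul]; exact h2 _
    rcases Int.even_or_odd n with ⟨r, hr⟩ | ⟨r, hr⟩
    · exact absurd (K.add_mem hy (hr ▸ h2n r)) hb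
    · have : a + (y + n • a) = y + ((r + 1) + (r + 1)) • a := by
        rw [hr]; simp only [add_zsmul, two_mul, one_zsmul]; abel
      rw [this]
      exact K.add_mem hy (h2n _)
  obtain ⟨c, hc⟩ : ∃ c, c ∉ K := by
    by_contra hcon
    push Not at hcon
    exact hKc.1 ((AddSubgroup.eq_top_iff' K).2 hcon)
  refine ⟨K, hK, ⟨c, hc⟩, ?_⟩
  have himg : {x : H | x ∉ K} = (fun x => c + x) '' (K : Set H) := by
    ext x
    simp only [Set.mem_setOf_eq, Set.mem_image, SetLike.mem_coe]
    constructor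
    · intro hx
      exact ⟨-c + x, hK _ _ (by simpa using hc) hx, by simp⟩
    · rintro ⟨y, hy, rfl⟩ h
      exact hc ((K.add_mem_cancel_right hy).1 h)
  have hcard : {x : H | x ∉ K}.ncard = (K : Set H).ncard := by
    rw [himg, Set.ncard_image_of_injective _ (add_right_injective c)]
  have hadd := Set.ncard_add_ncard_compl (K : Set H)
  have : (K : Set H)ᶜ = {x : H | x ∉ K} := rfl
  rw [this] at hadd
  omega

theorem Nk_le_of_equiv {G G' : Type*} [AddCommGroup G] [AddCommGroup G'] [Finite G]
    (e : G' ≃+ G) (k : ℕ) (B : Set G') (h1 : {g : G' | g +ᵥ B = B} = {0})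
    (h2 : itSum k B ≠ Set.univ) (h3 : ∀ g ∉ B, itSum k (B ∪ {g}) = Set.univ) :
    B.ncard ≤ Nk G k := by
  have him : ∀ (k : ℕ) (S : Set G'), itSum k (e '' S) = e '' itSum k S := by
    intro k S
    induction k with
    | zero => simp [itSum]
    | succ k ih => rw [itSum, itSum, ih, Set.image_add]
  refine le_csSup ⟨Nat.card G, ?_⟩ ⟨e '' B, ?_, ?_, ?_, ?_⟩
  · rintro _ ⟨A, -, -, -, rfl⟩
    rw [← Set.ncard_univ]
    exact Set.ncard_le_ncard (Set.subset_univ A)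
  · ext g
    obtain ⟨g, rfl⟩ := e.surjective g
    have hv : e g +ᵥ (e '' B) = e '' (g +ᵥ B) := by
      ext x
      simp only [Set.mem_vadd_set, Set.mem_image, vadd_eq_add]
      constructor
      · rintro ⟨_, ⟨y, hy, rfl⟩, rfl⟩
        exact ⟨_, ⟨y, hy, rfl⟩, by simp⟩
      · rintro ⟨_, ⟨y, hy, rfl⟩, rfl⟩
        exact ⟨_, ⟨y, hy, rfl⟩, by simp⟩
    have := Set.ext_iff.1 h1 g
    simp only [Set.mem_setOf_eq, Set.mem_singleton_iff] at this ⊢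
    rw [hv, (Set.image_injective.2 e.injective).eq_iff, this]
    simp
  · rw [him]
    intro h
    exact h2 (Set.image_injective.2 e.injective (by rw [h, Set.image_univ_of_surjective e.surjective]))
  · intro g hg
    obtain ⟨g, rfl⟩ := e.surjective g
    have hgB : g ∉ B := fun h => hg ⟨g, h, rfl⟩
    have : e '' B ∪ {e g} = e '' (B ∪ {g}) := by rw [Set.image_union, Set.image_singleton]
    rw [this, him, h3 g hgB, Set.image_univ_of_surjective e.surjective]
  · rw [Set.ncard_image_of_injective _ e.injective]

/-- If a finite abelian group `G` decomposes as `G = G₁ ⊕ H` with `G₁` cyclic of order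
`3m+2` (`m ≥ 1`) and `|H|` even, then `N₃(G) ≥ ((2m+1)/(6m+4))·|G|`. -/
theorem stmt12 (G : Type*) [AddCommGroup G] [Finite G] (m : ℕ) (hm : 1 ≤ m)
    (G₁ H : AddSubgroup G) (hcompl : IsCompl G₁ H)
    (hcyc : IsAddCyclic G₁) (hcard : Nat.card G₁ = 3 * m + 2)
    (heven : Even (Nat.card H)) :
    (Nk G 3 : ℝ) ≥ (2 * m + 1) / (6 * m + 4) * Nat.card G := by
  obtain ⟨k, rfl⟩ : ∃ k, m = k + 1 := ⟨m - 1, by omega⟩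
  have hcard' : Nat.card G₁ = 3 * k + 5 := by omega
  let e1 : ZMod (3 * k + 5) ≃+ G₁ :=
    (ZMod.ringEquivCongr hcard'.symm).toAddEquiv.trans (zmodAddCyclicAddEquiv hcyc)
  let f : G₁ × H →+ G := G₁.subtype.coprod H.subtype
  have hf : Function.Bijective f := by
    constructor
    · rw [injective_iff_map_eq_zero]
      rintro ⟨a, b⟩ h
      have h' : (a : G) + (b : G) = 0 := h
      have ha : (a : G) ∈ H := by
        rw [eq_neg_of_add_eq_zero_left h']; exact H.neg_mem b.2
      have ha0 : (a : G) = 0 := (AddSubgroup.disjoint_def.1 hcompl.disjoint) a.2 ha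
      have hb0 : (b : G) = 0 := by simpa [ha0] using h'
      exact Prod.ext (Subtype.ext ha0) (Subtype.ext hb0)
    · intro x
      have hx : x ∈ G₁ ⊔ H := by rw [hcompl.sup_eq_top]; exact AddSubgroup.mem_top x
      obtain ⟨a, ha, b, hb, rfl⟩ := AddSubgroup.mem_sup.1 hx
      exact ⟨(⟨a, ha⟩, ⟨b, hb⟩), rfl⟩
  let e2 : G₁ × H ≃+ G := AddEquiv.ofBijective f hf
  let e : ZMod (3 * k + 5) × H ≃+ G := (AddEquiv.prodCongr e1 (AddEquiv.refl H)).trans e2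
  obtain ⟨K, hK, ⟨c, hc⟩, hcK⟩ := exists_half heven
  have hle := Nk_le_of_equiv e 3 (slB K k) (slB_aper K hc k)
    (fun h => slB_miss K hK k (h ▸ Set.mem_univ _)) (slB_max K hK hc k)
  have hG : Nat.card G = (3 * k + 5) * Nat.card H := by
    rw [← Nat.card_congr e2.toEquiv, Nat.card_prod, hcard']
  have hb := slB_card K hcK k
  have hfin : (2 * k + 3) * Nat.card H ≤ 2 * Nk G 3 := hb.trans (by omega)
  have hR : ((2 * k + 3) * Nat.card H : ℝ) ≤ 2 * Nk G 3 := by exact_mod_cast hfin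
  rw [hG]
  push_cast
  have : (2 * ((k : ℝ) + 1) + 1) / (6 * (k + 1) + 4) * ((3 * k + 5) * Nat.card H)
      = (2 * k + 3) * Nat.card H / 2 := by
    field_simp
    ring
  rw [this]
  linarith
end

section
/- For any finite abelian group G and integer k ≥ 1, N_k(G) equals the maximum of |A| over all aperiodic subsets A ⊆ G such that k(A ∪ {0}) ≠ G and k(A ∪ {0} ∪ {g}) = G for every g ∈ G∖A (with the convention max ∅ = 0). -/
open Pointwise

theorem itSum_vadd_aux {G : Type*} [AddCommGroup G] (g : G) (A : Set G) (k : ℕ) :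
    itSum k (g +ᵥ A) = (k • g) +ᵥ itSum k A := by
  induction k with
  | zero => simp [itSum]
  | succ n ih =>
    have h : ∀ (x : G) (S : Set G), x +ᵥ S = {x} + S := by
      intro x S
      rw [← Set.singleton_vadd]; rfl
    simp only [itSum]
    rw [ih, h, h, h, succ_nsmul, ← Set.singleton_add_singleton]
    abel

/-- `N_k(G)` equals the maximum of `|A|` over all aperiodic `A ⊆ G` such that
`k(A ∪ {0}) ≠ G` and `k(A ∪ {0} ∪ {g}) = G` for every `g ∈ G∖A`. -/
theorem stmt13 (G : Type*) [AddCommGroup G] [Finite G] (k : ℕ) (hk : 1 ≤ k) :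
    Nk G k = sSup {m : ℕ | ∃ A : Set G,
      {g : G | g +ᵥ A = A} = {0} ∧
      itSum k (A ∪ {0}) ≠ Set.univ ∧
      (∀ g ∉ A, itSum k (A ∪ {0} ∪ {g}) = Set.univ) ∧
      m = A.ncard} := by
  have bdd : ∀ S : Set ℕ, (∀ m ∈ S, ∃ A : Set G, m = A.ncard) → BddAbove S := by
    intro S hS
    refine ⟨Nat.card G, fun m hm => ?_⟩
    obtain ⟨A, rfl⟩ := hS m hm
    exact Set.ncard_le_card A
  unfold Nk
  apply le_antisymm
  · apply csSup_le'
    rintro m ⟨A, hA, hne, hmax, rfl⟩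
    rcases A.eq_empty_or_nonempty with rfl | ⟨a, ha⟩
    · simp
    apply le_csSup
    · apply bdd
      rintro m ⟨A, -, -, -, h⟩
      exact ⟨A, h⟩
    have h0 : (0 : G) ∈ (-a) +ᵥ A := Set.mem_vadd_set.2 ⟨a, ha, by simp⟩
    have hu : ((-a) +ᵥ A) ∪ {0} = (-a) +ᵥ A := by
      rw [Set.union_eq_left]; simpa using h0
    refine ⟨(-a) +ᵥ A, ?_, ?_, ?_, ?_⟩
    · rw [← hA]
      ext g
      simp only [Set.mem_setOf_eq]
      rw [vadd_comm g (-a) A]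
      exact (AddAction.injective (-a)).eq_iff
    · rw [hu, itSum_vadd_aux]
      intro h
      apply hne
      have := congrArg (fun S : Set G => (-(k • (-a))) +ᵥ S) h
      simpa only [neg_vadd_vadd, Set.vadd_set_univ] using this
    · intro g hg
      rw [hu]
      have hg' : a + g ∉ A := fun h => hg (Set.mem_vadd_set.2 ⟨a + g, h, by simp⟩)
      have e : ((-a) +ᵥ A) ∪ {g} = (-a) +ᵥ (A ∪ {a + g}) := by
        rw [Set.vadd_set_union, Set.vadd_set_singleton]; simp
      rw [e, itSum_vadd_aux, hmax _ hg', Set.vadd_set_univ]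
    · exact (Set.ncard_image_of_injective A (AddAction.injective (-a))).symm
  · apply csSup_le'
    rintro m ⟨A, hA, hne, hmax, rfl⟩
    have h0 : (0 : G) ∈ A := by
      by_contra h
      apply hne
      have := hmax 0 h
      rwa [Set.union_assoc, Set.union_self] at this
    have hu : A ∪ {0} = A := by
      rw [Set.union_eq_left]; simpa using h0
    rw [hu] at hne hmax
    apply le_csSup
    · apply bdd
      rintro m ⟨A, -, -, -, h⟩
      exact ⟨A, h⟩
    exact ⟨A, hA, hne, hmax, rfl⟩
end

section
/- Let G be a finite abelian group and k ≥ 1 an integer, and define t⁺_{k+1}(G) as the maximum of |A| over all aperiodic generating subsets A ⊆ G such that k(A ∪ {0}) ≠ G and k(A ∪ {0} ∪ {g}) = G for every g ∈ G∖A (with max ∅ = 0). Then t⁺_{k+1}(G) = N_k(G), except when |G| is prime and k ≥ |G| − 1, in which case t⁺_{k+1}(G) = 0 and N_k(G) = 1. -/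
open Pointwise

/-- `tPlus G k` (that is, `t⁺_{k+1}(G)`) is the largest size of an aperiodic generating
subset `A ⊆ G` with `k(A ∪ {0}) ≠ G` which is maximal with this property; `0` if no such
subset exists. -/
noncomputable def tPlus (G : Type*) [AddCommGroup G] (k : ℕ) : ℕ :=
  sSup {m : ℕ | ∃ A : Set G,
    {g : G | g +ᵥ A = A} = {0} ∧
    AddSubgroup.closure A = ⊤ ∧
    itSum k (A ∪ {0}) ≠ Set.univ ∧
    (∀ g ∉ A, itSum k (A ∪ {0} ∪ {g}) = Set.univ) ∧
    m = A.ncard}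

theorem itSum_mono' {G : Type*} [AddCommGroup G] (k : ℕ) {A B : Set G} (h : A ⊆ B) :
    itSum k A ⊆ itSum k B := by
  induction k with
  | zero => exact subset_rfl
  | succ k ih => exact Set.add_subset_add ih h

theorem itSum_subgroup {G : Type*} [AddCommGroup G] (k : ℕ) {A : Set G} (H : AddSubgroup G)
    (h : A ⊆ H) : itSum k A ⊆ H := by
  induction k with
  | zero =>
    intro x hx
    have : x = 0 := hx
    rw [this]; exact H.zero_mem
  | succ k ih =>
    rintro _ ⟨x, hx, y, hy, rfl⟩
    exact H.add_mem (ih hx) (h hy)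

theorem itSum_vadd {G : Type*} [AddCommGroup G] (k : ℕ) (A : Set G) (x : G) :
    itSum k (x +ᵥ A) = (k • x) +ᵥ itSum k A := by
  induction k with
  | zero => simp [itSum]
  | succ k ih =>
    simp only [itSum]
    rw [ih]
    ext y
    constructor
    · rintro ⟨_, ⟨u, hu, rfl⟩, _, ⟨v, hv, rfl⟩, rfl⟩
      refine ⟨u + v, ⟨u, hu, v, hv, rfl⟩, ?_⟩
      simp only [vadd_eq_add, succ_nsmul]; abel
    · rintro ⟨_, ⟨u, hu, v, hv, rfl⟩, rfl⟩
      refine ⟨_, ⟨u, hu, rfl⟩, _, ⟨v, hv, rfl⟩, ?_⟩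
      simp only [vadd_eq_add, succ_nsmul]; abel

theorem itSum_vadd_univ {G : Type*} [AddCommGroup G] (k : ℕ) (A : Set G) (x : G) :
    itSum k (x +ᵥ A) = Set.univ ↔ itSum k A = Set.univ := by
  rw [itSum_vadd]
  constructor
  · intro h
    have := congrArg (fun S => (-(k • x)) +ᵥ S) h
    simpa using this
  · intro h
    rw [h]; simp

theorem mem_itSum_pair {G : Type*} [AddCommGroup G] (k : ℕ) (g y : G) :
    y ∈ itSum k ({0} ∪ {g}) ↔ ∃ j ≤ k, y = j • g := by
  induction k generalizing y with
  | zero => simp [itSum]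
  | succ k ih =>
    constructor
    · rintro ⟨u, hu, v, hv, rfl⟩
      obtain ⟨j, hj, rfl⟩ := (ih u).1 hu
      rcases hv with hv | hv
      · refine ⟨j, by omega, ?_⟩
        have : v = 0 := hv
        simp [this]
      · refine ⟨j + 1, by omega, ?_⟩
        have : v = g := hv
        simp [this, succ_nsmul]
    · rintro ⟨j, hj, rfl⟩
      rcases Nat.lt_or_ge k j with h | h
      · have : j = k + 1 := by omega
        subst this
        exact ⟨k • g, (ih _).2 ⟨k, le_rfl, rfl⟩, g, Or.inr rfl, by simp [succ_nsmul]⟩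
      · exact ⟨j • g, (ih _).2 ⟨j, h, rfl⟩, 0, Or.inl rfl, by simp⟩

theorem itSum_pair_univ {G : Type*} [AddCommGroup G] [Finite G] (k : ℕ)
    (hp : (Nat.card G).Prime) (hk : Nat.card G - 1 ≤ k) (g : G) (hg : g ≠ 0) :
    itSum k ({0} ∪ {g}) = Set.univ := by
  have : Fact (Nat.card G).Prime := ⟨hp⟩
  rw [Set.eq_univ_iff_forall]
  intro y
  rw [mem_itSum_pair]
  have h1 : y ∈ AddSubgroup.zmultiples g := mem_zmultiples_of_prime_card rfl hg
  rw [← mem_multiples_iff_mem_zmultiples] at h1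
  obtain ⟨n, rfl⟩ := h1
  have h0 : 0 < Nat.card G := hp.pos
  refine ⟨n % Nat.card G, ?_, ?_⟩
  · have := Nat.mod_lt n h0
    omega
  · simp

theorem itSum_two_univ {G : Type*} [AddCommGroup G] [Finite G] (k : ℕ)
    (hp : (Nat.card G).Prime) (hk : Nat.card G - 1 ≤ k) (A : Set G) (a b : G) (ha : a ∈ A)
    (hb : b ∈ A) (hab : a ≠ b) : itSum k A = Set.univ := by
  have h := itSum_pair_univ k hp hk (b - a) (sub_ne_zero.2 hab.symm)
  rw [← itSum_vadd_univ k _ a] at h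
  rw [← Set.univ_subset_iff, ← h]
  apply itSum_mono'
  rintro _ ⟨y, hy | hy, rfl⟩
  · have : y = 0 := hy
    simpa [this] using ha
  · have : y = b - a := hy
    simpa [this] using hb

theorem prime_of_pairs {G : Type*} [AddCommGroup G] [Finite G] (k : ℕ)
    (hn : Nat.card G ≠ 1) (h : ∀ g : G, g ≠ 0 → itSum k ({0} ∪ {g}) = Set.univ) :
    (Nat.card G).Prime ∧ Nat.card G - 1 ≤ k := by
  have hp := Nat.minFac_prime hn
  have : Fact (Nat.card G).minFac.Prime := ⟨hp⟩
  obtain ⟨g, hg⟩ := exists_prime_addOrderOf_dvd_card' (G := G) _ (Nat.minFac_dvd (Nat.card G))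
  have hg0 : g ≠ 0 := by
    rintro rfl
    rw [addOrderOf_zero] at hg
    exact hp.one_lt.ne hg
  have hu := h g hg0
  constructor
  · have ht : AddSubgroup.zmultiples g = ⊤ := by
      rw [eq_top_iff]
      intro y _
      have : y ∈ itSum k ({0} ∪ {g}) := by rw [hu]; trivial
      obtain ⟨j, -, rfl⟩ := (mem_itSum_pair k g y).1 this
      exact AddSubgroup.nsmul_mem_zmultiples g j
    have h2 := Nat.card_zmultiples g
    rw [ht, AddSubgroup.card_top, hg] at h2
    rw [h2]; exact hp
  · have hs : Function.Surjective (fun j : Fin (k + 1) => (j : ℕ) • g) := by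
      intro y
      have : y ∈ itSum k ({0} ∪ {g}) := by rw [hu]; trivial
      obtain ⟨j, hj, rfl⟩ := (mem_itSum_pair k g y).1 this
      exact ⟨⟨j, by omega⟩, rfl⟩
    have := Nat.card_le_card_of_surjective _ hs
    simp at this
    omega

theorem sSup_le_aux (S T : Set ℕ) (hT : BddAbove T) (h : ∀ m ∈ S, m ∈ T ∨ m = 0) :
    sSup S ≤ sSup T := by
  rcases S.eq_empty_or_nonempty with rfl | hS
  · simp
  · apply csSup_le hS
    intro m hm
    rcases h m hm with h | h
    · exact le_csSup hT h
    · omega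

theorem zero_mem_aux {G : Type*} [AddCommGroup G] (k : ℕ) (A : Set G)
    (h1 : itSum k (A ∪ {0}) ≠ Set.univ)
    (h2 : ∀ g ∉ A, itSum k (A ∪ {0} ∪ {g}) = Set.univ) : A ∪ {0} = A := by
  have : (0 : G) ∈ A := by
    by_contra h
    apply h1
    have := h2 0 h
    rwa [Set.union_assoc, Set.union_self] at this
  simpa using this

theorem itSum_empty' {G : Type*} [AddCommGroup G] (k : ℕ) (hk : 1 ≤ k) :
    itSum k (∅ : Set G) = ∅ := by
  obtain ⟨k, rfl⟩ : ∃ j, k = j + 1 := ⟨k - 1, by omega⟩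
  simp [itSum]

/-- `t⁺_{k+1}(G) = N_k(G)`, except when `|G|` is prime and `k ≥ |G| − 1`, in which case
`t⁺_{k+1}(G) = 0` and `N_k(G) = 1`. -/
theorem stmt15 (G : Type*) [AddCommGroup G] [Finite G] (k : ℕ) (hk : 1 ≤ k) :
    (¬ ((Nat.card G).Prime ∧ Nat.card G - 1 ≤ k) → tPlus G k = Nk G k) ∧
    ((Nat.card G).Prime ∧ Nat.card G - 1 ≤ k → tPlus G k = 0 ∧ Nk G k = 1) := by
  constructor
  · intro hne
    apply le_antisymm
    · apply sSup_le_aux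
      · refine ⟨Nat.card G, ?_⟩
        rintro _ ⟨A, -, -, -, rfl⟩
        exact Set.ncard_le_card A
      · rintro m ⟨A, hA, -, h1, h2, rfl⟩
        have h0 := zero_mem_aux k A h1 h2
        rw [h0] at h1 h2
        exact Or.inl ⟨A, hA, h1, h2, rfl⟩
    · apply sSup_le_aux
      · refine ⟨Nat.card G, ?_⟩
        rintro _ ⟨A, -, -, -, -, rfl⟩
        exact Set.ncard_le_card A
      · rintro m ⟨A', hA', h1', h2', rfl⟩
        rcases A'.eq_empty_or_nonempty with rfl | ⟨a, ha⟩
        · right; simp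
        left
        -- translate
        obtain ⟨A, hAdef⟩ : ∃ A, A = (-a) +ᵥ A' := ⟨_, rfl⟩
        have hAA : A' = a +ᵥ A := by rw [hAdef]; simp
        have hcard : A'.ncard = A.ncard := by
          rw [hAA]
          exact Set.ncard_image_of_injective _ (add_right_injective a)
        have hz : (0 : G) ∈ A := by
          rw [hAdef]; exact ⟨a, ha, by simp⟩
        have hA : {g : G | g +ᵥ A = A} = {0} := by
          rw [← hA', hAA]
          ext g
          simp only [Set.mem_setOf_eq]
          rw [vadd_comm g a A]
          exact (vadd_left_cancel_iff a).symm
        have h1 : itSum k A ≠ Set.univ := by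
          rwa [hAA, Ne, itSum_vadd_univ] at h1'
        have h2 : ∀ g ∉ A, itSum k (A ∪ {g}) = Set.univ := by
          intro g hg
          have := h2' (a + g) (by
            rw [hAA]
            rintro ⟨y, hy, hy2⟩
            have : y = g := add_left_cancel hy2
            exact hg (this ▸ hy))
          rw [← itSum_vadd_univ k _ a]
          rw [← this, hAA, Set.vadd_set_union]
          simp
        have h00 : A ∪ {0} = A := by simpa using hz
        refine ⟨A, hA, ?_, by rwa [h00], by rwa [h00], hcard⟩
        by_contra hcl
        have hsub : A ⊆ AddSubgroup.closure A := AddSubgroup.subset_closure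
        have hAH : (AddSubgroup.closure A : Set G) ⊆ A := by
          intro g hg
          by_contra hgA
          apply hcl
          rw [eq_top_iff]
          intro x _
          have hx : x ∈ itSum k (A ∪ {g}) := by rw [h2 g hgA]; trivial
          refine itSum_subgroup k (AddSubgroup.closure A) ?_ hx
          apply Set.union_subset hsub
          simpa using hg
        have hA0 : A = {0} := by
          rw [← hA]
          ext g
          simp only [Set.mem_setOf_eq]
          constructor
          · intro hg
            ext y
            rw [Set.mem_vadd_set_iff_neg_vadd_mem]
            constructor
            · intro hy
              apply hAH
              have := (AddSubgroup.closure A).add_mem (hsub hg) (hsub hy)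
              simpa using this
            · intro hy
              apply hAH
              exact (AddSubgroup.closure A).add_mem
                ((AddSubgroup.closure A).neg_mem (hsub hg)) (hsub hy)
          · intro hg
            rw [← hg]
            exact ⟨0, hz, by simp⟩
        apply hne
        apply prime_of_pairs
        · intro hc
          apply hcl
          have := (Nat.card_eq_one_iff_unique.1 hc).1
          exact Subsingleton.elim _ _
        · intro g hg
          have := h2 g (by rw [hA0]; simpa using hg)
          rwa [hA0] at this
  · rintro ⟨hp, hkp⟩
    have : Nontrivial G := (Finite.one_lt_card_iff_nontrivial).1 hp.one_lt
    constructor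
    · have : {m : ℕ | ∃ A : Set G,
          {g : G | g +ᵥ A = A} = {0} ∧
          AddSubgroup.closure A = ⊤ ∧
          itSum k (A ∪ {0}) ≠ Set.univ ∧
          (∀ g ∉ A, itSum k (A ∪ {0} ∪ {g}) = Set.univ) ∧
          m = A.ncard} = ∅ := by
        rw [Set.eq_empty_iff_forall_notMem]
        rintro m ⟨A, -, hc, h1, -, -⟩
        have hA : A ⊆ {0} := by
          intro x hx
          by_contra hx0
          exact h1 (itSum_two_univ k hp hkp _ x 0 (Or.inl hx) (Or.inr rfl) hx0)
        have := AddSubgroup.closure_mono hA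
        rw [hc, AddSubgroup.closure_singleton_zero] at this
        exact top_ne_bot (top_le_iff.1 (this) |>.symm)
      unfold tPlus
      rw [this]
      simp
    · apply IsGreatest.csSup_eq
      constructor
      · refine ⟨{0}, ?_, ?_, ?_, by simp⟩
        · ext g
          simp
        · intro h
          obtain ⟨x, hx⟩ := exists_ne (0 : G)
          apply hx
          have h3 := itSum_subgroup k (A := {0}) (⊥ : AddSubgroup G) (by simp)
          rw [h] at h3
          simpa using h3 (Set.mem_univ x)
        · intro g hg
          exact itSum_pair_univ k hp hkp g (by simpa using hg)
      · rintro m ⟨A, -, h1, -, rfl⟩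
        rw [Set.ncard_le_one]
        intro a ha b hb
        by_contra hab
        exact h1 (itSum_two_univ k hp hkp A a b ha hb hab)
end

section
/- Let n ≥ 1 be an integer and let A be a nonempty subset of G = (ℤ/5ℤ)^n of density α = 5^(-n)|A| such that 0 ∉ 3A. Then there exist a non-principal (additive) character χ of G and a complex cube root of unity ζ such that Re(−ζ · \widehat{1_A}(χ)) ≥ α²/(1−α), where \widehat{1_A}(χ) := 5^(-n) ∑_{a ∈ A} χ(a). -/
open Pointwise

lemma aux_tri (w : ℂ) (T : ℝ) (h : ∀ ζ : ℂ, ζ ^ 3 = 1 → (ζ * w).re < T) (hw : w ≠ 0) :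
    (w ^ 3).re < T * Complex.normSq w := by
  have hs : √3 * √3 = (3 : ℝ) := Real.mul_self_sqrt (by norm_num)
  have hpos : 0 < Complex.normSq w := Complex.normSq_pos.mpr hw
  have h1 := h 1 (by norm_num)
  have h2 := h ⟨-1/2, √3/2⟩ (by
    apply Complex.ext
    · simp [pow_succ]; linear_combination (3 / 8) * hs
    · simp [pow_succ]; linear_combination (-√3 / 8) * hs)
  have h3 := h ⟨-1/2, -√3/2⟩ (by
    apply Complex.ext
    · simp [pow_succ]; linear_combination (3 / 8) * hs
    · simp [pow_succ]; linear_combination (√3 / 8) * hs)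
  obtain ⟨x, y⟩ := w
  simp only [Complex.mul_re, Complex.one_re, Complex.one_im, pow_succ, pow_zero, one_mul,
    Complex.mul_im, Complex.normSq_mk] at *
  have key : ∀ u v z : ℝ, u < T → 0 ≤ u →
      u * (x * x + y * y) - ((x * x - y * y) * x - (x * y + y * x) * y) = 4 * u * (v - z) ^ 2 / 3 →
      ((x * x - y * y) * x - (x * y + y * x) * y) < T * (x * x + y * y) := by
    intro u v z hu hu0 he
    have : 0 ≤ 4 * u * (v - z) ^ 2 / 3 := by positivity
    nlinarith [mul_pos (sub_pos.mpr hu) hpos]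
  set s := √3
  by_cases hx : 0 ≤ x
  · refine key x ((-x + s * y) / 2) ((-x - s * y) / 2) (by linarith) hx ?_
    linear_combination (-4 * x * y ^ 2 / 3) * hs
  · by_cases hu : 0 ≤ -x + s * y
    · refine key ((-x + s * y) / 2) ((-x - s * y) / 2) x (by linarith) (by linarith) ?_
      linear_combination (-x * y ^ 2 - (-x + s * y) / 2 * y ^ 2 / 3) * hs
    · refine key ((-x - s * y) / 2) ((-x + s * y) / 2) x (by linarith) (by linarith) ?_
      linear_combination (-x * y ^ 2 - (-x - s * y) / 2 * y ^ 2 / 3) * hs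

theorem stmt16 (n : ℕ) (hn : 1 ≤ n) (A : Finset (Fin n → ZMod 5))
    (hne : A.Nonempty)
    (h3A : (0 : Fin n → ZMod 5) ∉ A + A + A) :
    ∃ χ : AddChar (Fin n → ZMod 5) ℂ, χ ≠ 1 ∧
      ∃ ζ : ℂ, ζ ^ 3 = 1 ∧
        (-(ζ * (((5 : ℂ) ^ n)⁻¹ * ∑ a ∈ A, χ a))).re ≥
          ((A.card : ℝ) / 5 ^ n) ^ 2 / (1 - (A.card : ℝ) / 5 ^ n) := by
  classical
  by_contra! hcon
  set S : AddChar (Fin n → ZMod 5) ℂ → ℂ := fun χ => ∑ a ∈ A, χ a with hS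
  have hcard : Fintype.card (Fin n → ZMod 5) = 5 ^ n := by simp [ZMod.card]
  have hc0 : (0 : ℝ) < A.card := by exact_mod_cast hne.card_pos
  have h0 : (0 : Fin n → ZMod 5) ∉ A := fun h => h3A <| by
    simpa using Finset.add_mem_add (Finset.add_mem_add h h) h
  have hcN : (A.card : ℝ) < 5 ^ n := by
    have : A.card < Fintype.card (Fin n → ZMod 5) := by
      apply Finset.card_lt_univ_of_notMem h0
    rw [hcard] at this
    exact_mod_cast this
  set c : ℝ := (A.card : ℝ) with hc
  have hN : (0 : ℝ) < 5 ^ n := by positivity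
  have hS1 : S 1 = (c : ℂ) := by simp [hS, hc]
  have hcube : ∑ χ, S χ ^ 3 = 0 := by
    have : ∀ χ, S χ ^ 3 = ∑ a ∈ A, ∑ b ∈ A, ∑ d ∈ A, χ (a + b + d) := by
      intro χ
      simp only [hS, pow_succ, pow_zero, one_mul, Finset.sum_mul_sum, AddChar.map_add_eq_mul]
      simp only [Finset.sum_mul]
      exact Finset.sum_congr rfl fun a _ => Finset.sum_comm
    simp only [this]
    rw [Finset.sum_comm]
    refine Finset.sum_eq_zero fun a ha => ?_
    rw [Finset.sum_comm]
    refine Finset.sum_eq_zero fun b hb => ?_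
    rw [Finset.sum_comm]
    refine Finset.sum_eq_zero fun d hd => ?_
    rw [AddChar.sum_apply_eq_zero_iff_ne_zero]
    intro h
    exact h3A (h ▸ Finset.add_mem_add (Finset.add_mem_add ha hb) hd)
  have hsq : ∑ χ, Complex.normSq (S χ) = 5 ^ n * c := by
    have : ∀ χ, (Complex.normSq (S χ) : ℂ) = ∑ a ∈ A, ∑ b ∈ A, χ (a - b) := by
      intro χ
      rw [← Complex.mul_conj]
      simp only [hS, map_sum, Finset.sum_mul_sum, sub_eq_add_neg, AddChar.map_add_eq_mul,
        AddChar.map_neg_eq_conj]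
    have h2 : ((∑ χ, Complex.normSq (S χ) : ℝ) : ℂ) = ((5 ^ n * c : ℝ) : ℂ) := by
      push_cast
      simp only [this]
      rw [Finset.sum_comm]
      have : ∀ a ∈ A, ∑ χ : AddChar (Fin n → ZMod 5) ℂ, ∑ b ∈ A, χ (a - b) = 5 ^ n := by
        intro a ha
        rw [Finset.sum_comm]
        simp only [AddChar.sum_apply_eq_ite, sub_eq_zero, hcard]
        simp [ha]
      rw [Finset.sum_congr rfl this]
      simp [hc, mul_comm]
    exact_mod_cast h2
  set T : ℝ := c ^ 2 / (5 ^ n - c) with hT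
  have hbd : ∀ χ, χ ≠ 1 → S χ ≠ 0 → ((-S χ) ^ 3).re < T * Complex.normSq (S χ) := by
    intro χ hχ hs
    have := aux_tri (-S χ) T (fun ζ hζ => ?_) (neg_ne_zero.mpr hs)
    · simpa using this
    have h := hcon χ hχ ζ hζ
    have e1 : (-(ζ * (((5 : ℂ) ^ n)⁻¹ * ∑ a ∈ A, χ a))) =
        (((5 ^ n : ℝ)⁻¹ : ℝ) : ℂ) * (ζ * -S χ) := by
      push_cast; simp only [hS]; ring
    have e2 : (c / 5 ^ n) ^ 2 / (1 - c / 5 ^ n) = (5 ^ n)⁻¹ * T := by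
      have : 5 ^ n - c ≠ 0 := (sub_pos.mpr hcN).ne'
      rw [hT]; field_simp
    rw [e1, e2, Complex.re_ofReal_mul] at h
    exact lt_of_mul_lt_mul_left h (by positivity)
  have hcube' : ∑ χ ∈ Finset.univ.erase 1, ((-S χ) ^ 3).re = c ^ 3 := by
    have h := Finset.add_sum_erase Finset.univ (fun χ => S χ ^ 3) (Finset.mem_univ 1)
    rw [hcube] at h
    simp only [hS1] at h
    have h' := congrArg Complex.re h
    rw [Complex.add_re, Complex.re_sum] at h'
    have e : ∀ χ, ((-S χ) ^ 3).re = -(S χ ^ 3).re := fun χ => by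
      rw [← Complex.neg_re]; congr 1; ring
    simp only [e, Finset.sum_neg_distrib]
    have e3 : ((c : ℂ) ^ 3).re = c ^ 3 := by
      rw [← Complex.ofReal_pow, Complex.ofReal_re]
    rw [e3, Complex.zero_re] at h'
    linarith
  have hsq' : ∑ χ ∈ Finset.univ.erase 1, Complex.normSq (S χ) = c * (5 ^ n - c) := by
    have h := Finset.add_sum_erase Finset.univ (fun χ => Complex.normSq (S χ)) (Finset.mem_univ 1)
    rw [hsq] at h
    simp only [hS1, Complex.normSq_ofReal] at h
    linarith
  have hTs : T * (c * (5 ^ n - c)) = c ^ 3 := by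
    have : 5 ^ n - c ≠ 0 := (sub_pos.mpr hcN).ne'
    rw [hT]; field_simp
  have hex : ∃ χ ∈ Finset.univ.erase (1 : AddChar (Fin n → ZMod 5) ℂ), S χ ≠ 0 := by
    by_contra! hz
    rw [Finset.sum_eq_zero (fun χ hχ => by rw [hz χ hχ]; simp)] at hcube'
    exact (pow_pos hc0 3).ne hcube'
  have hlt : ∑ χ ∈ Finset.univ.erase 1, ((-S χ) ^ 3).re <
      ∑ χ ∈ Finset.univ.erase 1, T * Complex.normSq (S χ) := by
    refine Finset.sum_lt_sum (fun χ hχ => ?_) ?_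
    · by_cases hs : S χ = 0
      · simp [hs]
      · exact (hbd χ (Finset.ne_of_mem_erase hχ) hs).le
    · obtain ⟨χ, hχ, hs⟩ := hex
      exact ⟨χ, hχ, hbd χ (Finset.ne_of_mem_erase hχ) hs⟩
  rw [← Finset.mul_sum, hsq', hcube', hTs] at hlt
  exact lt_irrefl _ hlt
end
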